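/- arXiv:1704.02413 — 2 statements merged into one kernel-verified Lean document; each statement's English description precedes it below -/
import Mathlib

section
/- Let μ be a nonzero l-regular partition with Mullineux components μ^1, μ^2, …, μ^t. Then ℓ(Mull(μ)) = ℓ(Mull(μ^1)) + ℓ(Mull(μ^2)) + … + ℓ(Mull(μ^t)). -/
noncomputable section

/-- `p : ℕ → ℕ` represents the partition `λ` with `p i = λ_{i+1}` (0-indexed parts):
a weakly decreasing, eventually zero sequence. -/
def IsPartition (p : ℕ → ℕ) : Prop :=
  (∀ i j, i ≤ j → p j ≤ p i) ∧ ∃ N, ∀ i, N ≤ i → p i = 0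

/-- `ℓ(λ)`, the number of nonzero parts. -/
def plen (p : ℕ → ℕ) : ℕ := sInf {N | p N = 0}

/-- the degree (number of boxes) of the partition. -/
def pdeg (p : ℕ → ℕ) : ℕ := ∑ i ∈ Finset.range (plen p), p i

/-- `λ` is `l`-regular: no `l` consecutive parts are equal and nonzero. -/
def IsLRegular (l : ℕ) (p : ℕ → ℕ) : Prop :=
  ∀ i, p i ≠ 0 → p (i + l - 1) ≠ p i

/-- `λ` is `l`-restricted: `λ_i - λ_{i+1} < l` for all `i`. -/
def IsLRestricted (l : ℕ) (p : ℕ → ℕ) : Prop :=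
  ∀ i, p i - p (i + 1) < l

/-- the transpose (conjugate) partition. -/
def conjP (p : ℕ → ℕ) : ℕ → ℕ :=
  fun j => ((Finset.range (plen p)).filter fun i => j < p i).card

/-- the minimal `h ≥ 1` with `λ_1 - λ_{h+1} + h ≥ l`: when `e(λ) > l`, the first
`l`-segment of the `l`-edge lies in rows `1, …, h`. -/
def firstSeg (l : ℕ) (p : ℕ → ℕ) : ℕ := sInf {h | 1 ≤ h ∧ l ≤ p 0 - p h + h}

/-- removal of the `l`-edge (with fuel): if `e(λ) ≤ l` the whole edge is removed,
otherwise the first `l`-segment is removed from rows `1, …, h` (`h = firstSeg`) and one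
recurses on `(λ_{h+1}, λ_{h+2}, …)`. -/
def removeLEdgeAux (l : ℕ) : ℕ → (ℕ → ℕ) → ℕ → ℕ
  | 0, _ => fun _ => 0
  | n + 1, p =>
    if p 0 = 0 then fun _ => 0
    else if p 0 + plen p - 1 ≤ l then fun i => p (i + 1) - 1
    else fun i =>
      if i + 1 < firstSeg l p then p (i + 1) - 1
      else if i + 1 = firstSeg l p then p 0 + firstSeg l p - 1 - l
      else removeLEdgeAux l n (fun j => p (j + firstSeg l p)) (i - firstSeg l p)

/-- the partition obtained by removing the `l`-edge of `λ`. -/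
def removeLEdge (l : ℕ) (p : ℕ → ℕ) : ℕ → ℕ := removeLEdgeAux l (plen p) p

/-- `e_l(λ)`, the number of nodes of the `l`-edge. -/
def elen (l : ℕ) (p : ℕ → ℕ) : ℕ := pdeg p - pdeg (removeLEdge l p)

/-- the length of `Mull(λ)` prescribed by the defining recursion of the Mullineux map. -/
def mullLen (l : ℕ) (p : ℕ → ℕ) : ℕ :=
  if l ∣ elen l p then elen l p - plen p else elen l p - plen p + 1

/-- the Mullineux map (with fuel): `Mull(0) = 0` and, for `λ ≠ 0` `l`-regular with `ν`
obtained from `λ` by removing the `l`-edge, `Mull(λ)` is the unique `l`-regular partition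
whose `l`-edge removal leaves `Mull(ν)` and whose length is `e_l(λ) - ℓ(λ)` if
`l ∣ e_l(λ)` and `e_l(λ) - ℓ(λ) + 1` otherwise. -/
def mullAux (l : ℕ) : ℕ → (ℕ → ℕ) → ℕ → ℕ
  | 0, _ => fun _ => 0
  | n + 1, p =>
    if p 0 = 0 then fun _ => 0
    else
      Classical.epsilon fun μ : ℕ → ℕ =>
        IsPartition μ ∧ IsLRegular l μ ∧
          removeLEdge l μ = mullAux l n (removeLEdge l p) ∧ plen μ = mullLen l p

/-- the Mullineux map. -/
def mull (l : ℕ) (p : ℕ → ℕ) : ℕ → ℕ := mullAux l (pdeg p) p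

/-- the list of Mullineux components (with fuel). -/
def mullCompsAux (l : ℕ) : ℕ → (ℕ → ℕ) → List (ℕ → ℕ)
  | 0, _ => []
  | n + 1, p =>
    if p 0 = 0 then []
    else if elen l p ≤ l then [p]
    else (fun i => if i < firstSeg l p then p i else 0) ::
      mullCompsAux l n (fun j => p (j + firstSeg l p))

/-- the Mullineux components of `λ`. -/
def mullComps (l : ℕ) (p : ℕ → ℕ) : List (ℕ → ℕ) := mullCompsAux l (plen p) p

/-- edge `l`-connectedness (with fuel): consecutive Mullineux components `α, ρ` satisfy
`α_1 - ρ_1 + ℓ(α) = l`. -/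
def edgeConnAux (l : ℕ) : ℕ → (ℕ → ℕ) → Prop
  | 0, _ => True
  | n + 1, p =>
    if elen l p ≤ l then True
    else p 0 + firstSeg l p = l + p (firstSeg l p) ∧
      edgeConnAux l n fun j => p (j + firstSeg l p)

/-- `λ` is edge `l`-connected. -/
def EdgeLConnected (l : ℕ) (p : ℕ → ℕ) : Prop := edgeConnAux l (plen p) p

/-- the node `(i+1, λ_{i+1})` (in row `i+1`, 1-indexed) is a removable node. -/
def Removable (p : ℕ → ℕ) (i : ℕ) : Prop := p (i + 1) < p i

/-- removal of the removable node in row `i+1`. -/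
def removeNode (p : ℕ → ℕ) (i : ℕ) : ℕ → ℕ := fun k => if k = i then p i - 1 else p k

/-- there is an addable node `(i+1, λ_{i+1} + 1)` in row `i+1` (1-indexed). -/
def Addable (p : ℕ → ℕ) (i : ℕ) : Prop := i ≤ plen p ∧ (i = 0 ∨ p i < p (i - 1))

/-- the removable node in row `i+1` is suitable: its residue (mod `l`) differs from the
residue of every lower addable node. -/
def Suitable (l : ℕ) (p : ℕ → ℕ) (i : ℕ) : Prop :=
  Removable p i ∧ ∀ j, i < j → Addable p j →
    ¬ ((p j : ℤ) - (j : ℤ) ≡ (p i : ℤ) - (i : ℤ) - 1 [ZMOD (l : ℤ)])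

/-- the removable node in row `i+1` is co-suitable: its transpose node is a suitable
node of the transpose partition. -/
def CoSuitable (l : ℕ) (p : ℕ → ℕ) (i : ℕ) : Prop :=
  Removable p i ∧ Suitable l (conjP p) (p i - 1)

/-- `Φ_m`: partitions with at most `m` parts and `λ_1 - λ_m ≤ l - m`. -/
def Phi (l m : ℕ) : Set (ℕ → ℕ) :=
  {p | IsPartition p ∧ plen p ≤ m ∧ p 0 - p (m - 1) ≤ l - m}

/-- `λ` is `m`-distinguished: `λ = λ⁰ + lλ̄` with
`λ⁰ = ((l-m)^k, a_1, …, a_m)`, `l - m > a_1 ≥ … ≥ a_m ≥ 0`, and `λ̄` a partition with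
`λ̄_1 ≤ m - 1`. -/
def IsDistinguished (l m : ℕ) (p : ℕ → ℕ) : Prop :=
  ∃ (k : ℕ) (a : ℕ → ℕ) (pb : ℕ → ℕ),
    IsPartition pb ∧ pb 0 < m ∧
    (∀ i j, i ≤ j → a j ≤ a i) ∧ a 0 < l - m ∧ (∀ i, m ≤ i → a i = 0) ∧
    ∀ i, p i = (if i < k then l - m else a (i - k)) + l * pb i

/-- `q` is obtained from `p` by removing a skew `l`-hook (spanning rows `a+1, …, b+1`,
1-indexed). -/
def IsHookRemoval (l : ℕ) (p q : ℕ → ℕ) : Prop :=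
  IsPartition q ∧ ∃ a b : ℕ, a ≤ b ∧
    (∀ i, i < a → q i = p i) ∧
    (∀ i, a ≤ i → i < b → q i + 1 = p (i + 1)) ∧
    q b + l = p a + (b - a) ∧
    ∀ i, b < i → q i = p i

/-- `q` is the `l`-core of `p`: obtained by repeatedly removing skew `l`-hooks until
none remain. -/
def IsCoreOf (l : ℕ) (p q : ℕ → ℕ) : Prop :=
  Relation.ReflTransGen (fun x y => IsHookRemoval l x y) p q ∧ ∀ r, ¬ IsHookRemoval l q r

/-- the `l`-core of `p`. -/
def lCore (l : ℕ) (p : ℕ → ℕ) : ℕ → ℕ := Classical.epsilon (IsCoreOf l p)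


/-! ### List models -/

/-- the function attached to a list of parts -/
def lfn (L : List ℕ) : ℕ → ℕ := fun i => L.getD i 0

/-- `l`-edge removal of `a :: q`, computed row by row -/
def De (l : ℕ) : ℕ → List ℕ → List ℕ
  | a, [] => [a - l]
  | a, b :: q => if l + b ≤ a + 1 then (a - l) :: De l b q else (b - 1) :: De l (a + 1) q

/-- number of nodes removed -/
def Ee (l : ℕ) : ℕ → List ℕ → ℕ
  | a, [] => min a l
  | a, b :: q => if l + b ≤ a + 1 then l + Ee l b q else Ee l (a + 1) q

/-- chain value with threshold `x` -/
def Tt (l : ℕ) : ℤ → List ℕ → ℤ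
  | x, [] => min 0 x
  | x, b :: q => if (b : ℤ) ≤ x then l + Tt l (b - l + 1) q - 1 else Tt l (x + 1) q - 1

/-- `q` is a decreasing list of positive numbers bounded by `a` -/
def Dec : ℕ → List ℕ → Prop
  | _, [] => True
  | a, b :: q => 1 ≤ b ∧ b ≤ a ∧ Dec b q

/-- `q` is a decreasing list of numbers bounded by `a` -/
def Dec0 : ℕ → List ℕ → Prop
  | _, [] => True
  | a, b :: q => b ≤ a ∧ Dec0 b q

/-- regularity of lists -/
def Reg (l : ℕ) : List ℕ → Prop
  | [] => True
  | a :: q => (a ≠ 0 → q.getD (l - 2) 0 < a) ∧ Reg l q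

theorem Dec.mono {a a' : ℕ} {q : List ℕ} (h : Dec a q) (haa : a ≤ a') : Dec a' q := by
  cases q with
  | nil => trivial
  | cons b q => exact ⟨h.1, h.2.1.trans haa, h.2.2⟩

theorem Dec0.mono {a a' : ℕ} {q : List ℕ} (h : Dec0 a q) (haa : a ≤ a') : Dec0 a' q := by
  cases q with
  | nil => trivial
  | cons b q => exact ⟨h.1.trans haa, h.2⟩

theorem Dec.dec0 {a : ℕ} {q : List ℕ} (h : Dec a q) : Dec0 a q := by
  induction q generalizing a with
  | nil => trivial
  | cons b q ih => exact ⟨h.2.1, ih h.2.2⟩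

theorem Dec0.getD_le {a : ℕ} {q : List ℕ} (h : Dec0 a q) (k : ℕ) : q.getD k 0 ≤ a := by
  induction q generalizing a k with
  | nil => simp
  | cons b q ih =>
    cases k with
    | zero => simpa using h.1
    | succ k => simpa using (ih h.2 k).trans h.1

theorem Dec.getD_le {a : ℕ} {q : List ℕ} (h : Dec a q) (k : ℕ) : q.getD k 0 ≤ a :=
  h.dec0.getD_le k

theorem De_bound (l : ℕ) (hl : 2 ≤ l) (m : ℕ) (a : ℕ) (q : List ℕ) (ha : a - l ≤ m) (hq : Dec0 (m + 1) q) :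
    Dec0 m (De l a q) := by
  induction q generalizing a m with
  | nil => exact ⟨ha, trivial⟩
  | cons b q ih =>
    obtain ⟨h2, h3⟩ := hq
    unfold De
    split_ifs with h
    · exact ⟨ha, ih _ _ (by omega) (h3.mono (by omega))⟩
    · exact ⟨by omega, ih _ _ (by omega) (h3.mono (by omega))⟩

theorem De_dec0 (l : ℕ) (hl : 2 ≤ l) (a : ℕ) (q : List ℕ) (ha : 1 ≤ a) (hq : Dec a q) :
    Dec0 (a - 1) (De l a q) :=
  De_bound l (by omega) (a - 1) a q (by omega) (hq.dec0.mono (by omega))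

theorem De_length (l a : ℕ) (q : List ℕ) : (De l a q).length = q.length + 1 := by
  induction q generalizing a with
  | nil => rfl
  | cons b q ih => unfold De; split_ifs <;> simp [ih]

theorem De_sum (l : ℕ) (hl : 2 ≤ l) (a : ℕ) (q : List ℕ) (hq : Dec a q) :
    (De l a q).sum + Ee l a q = a + q.sum := by
  induction q generalizing a with
  | nil => simp [De, Ee]
  | cons b q ih =>
    obtain ⟨h1, h2, h3⟩ := hq
    unfold De Ee
    split_ifs with h
    · have := ih b h3
      simp; omega
    · have := ih (a + 1) (h3.mono (by omega))
      simp; omega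

theorem Ee_ge (l : ℕ) (hl : 2 ≤ l) (a : ℕ) (q : List ℕ) (j : ℕ) (hj : j + 1 ≤ l) (ha : j + 1 ≤ a)
    (hq : Dec (a - j) q) : q.length + 1 + j ≤ Ee l a q := by
  induction q generalizing a j with
  | nil => simp [Ee]; omega
  | cons b q ih =>
    obtain ⟨h1, h2, h3⟩ := hq
    unfold Ee
    split_ifs with h
    · have := ih b 0 (by omega) (by omega) h3
      simp; omega
    · have := ih (a + 1) (j + 1) (by omega) (by omega) (h3.mono (by omega))
      simp; omega

/-- the formula for the length -/
theorem Tt_eq (l : ℕ) (hl : 2 ≤ l) (a : ℕ) (q : List ℕ) (ha : 1 ≤ a) (hq : Dec a q) :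
    (l : ℤ) - 1 + Tt l (a - l + 1) q =
      Ee l a q - (q.length + 1) + (if l ∣ Ee l a q then 0 else 1) := by
  induction q generalizing a with
  | nil =>
    simp only [Tt]
    rcases le_or_gt l a with h | h
    · have hE : Ee l a [] = l := min_eq_right h
      rw [hE, if_pos (dvd_refl l)]; simp; omega
    · have hE : Ee l a [] = a := min_eq_left h.le
      rw [hE, if_neg (Nat.not_dvd_of_pos_of_lt ha h)]; simp; omega
  | cons b q ih =>
    obtain ⟨h1, h2, h3⟩ := hq
    unfold Tt Ee
    by_cases h : l + b ≤ a + 1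
    · rw [if_pos h, if_pos (by omega)]
      have := ih b h1 h3
      simp only [Nat.dvd_add_right (dvd_refl l)] at this ⊢
      simp only [List.length_cons]; push_cast
      linarith
    · rw [if_neg h, if_neg (by omega)]
      have := ih (a + 1) (by omega) (h3.mono (by omega))
      have e : ((a + 1 : ℕ) : ℤ) - l + 1 = (a : ℤ) - l + 1 + 1 := by push_cast; ring
      rw [e] at this
      simp only [List.length_cons]; push_cast
      linarith

theorem W_nonneg (l : ℕ) (hl : 2 ≤ l) (a : ℕ) (q : List ℕ) (ha : 1 ≤ a) (hq : Dec a q) :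
    0 ≤ (l : ℤ) - 1 + Tt l (a - l + 1) q := by
  rw [Tt_eq l hl a q ha hq]
  have := Ee_ge l hl a q 0 (by omega) (by omega) (by simpa using hq)
  split_ifs <;> omega

theorem W_pos (l : ℕ) (hl : 2 ≤ l) (a : ℕ) (q : List ℕ) (j : ℕ) (hj : j + 2 ≤ l) (ha : j + 1 ≤ a)
    (hq : Dec (a - j) q) (hr : q.getD (l - 2 - j) 0 < a - j) :
    (j : ℤ) + 1 ≤ (l : ℤ) - 1 + Tt l (a - l + 1) q := by
  induction q generalizing a j with
  | nil => simp only [Tt]; omega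
  | cons b q ih =>
    obtain ⟨h1, h2, h3⟩ := hq
    unfold Tt
    split_ifs with h
    · have := W_nonneg l hl b q h1 h3
      omega
    · rcases Nat.lt_or_ge (j + 2) l with h' | h'
      · have e : l - 2 - j = (l - 2 - (j + 1)) + 1 := by omega
        rw [e, List.getD_cons_succ] at hr
        have := ih (a + 1) (j + 1) (by omega) (by omega) (h3.mono (by omega)) (by omega)
        have e : ((a + 1 : ℕ) : ℤ) - l + 1 = (a : ℤ) - l + 1 + 1 := by push_cast; ring
        rw [e] at this
        push_cast at this
        linarith
      · have e : l - 2 - j = 0 := by omega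
        rw [e, List.getD_cons_zero] at hr
        omega

theorem Tt_congr (l : ℕ) (hl : 2 ≤ l) (L M : List ℕ) (h : lfn L = lfn M) (x : ℤ) :
    Tt l x L = Tt l x M := by
  have hz : ∀ (M : List ℕ) (x : ℤ), (∀ i, M.getD i 0 = 0) → Tt l x M = min 0 x := by
    intro M
    induction M with
    | nil => intro x _; rfl
    | cons b M ih =>
      intro x hM
      have h0 : b = 0 := by simpa using hM 0
      have h1 : ∀ i, M.getD i 0 = 0 := fun i => by simpa using hM (i + 1)
      unfold Tt
      rw [ih _ h1, ih _ h1]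
      split_ifs <;> omega
  induction L generalizing M x with
  | nil =>
    rw [hz M x]; · rfl
    intro i
    have := congrFun h i
    simpa [lfn] using this.symm
  | cons a L ih =>
    cases M with
    | nil =>
      rw [hz (a :: L) x]; · rfl
      intro i
      have := congrFun h i
      simpa [lfn] using this
    | cons b M =>
      have h0 : a = b := by simpa [lfn] using congrFun h 0
      have h1 : lfn L = lfn M := by
        funext i; simpa [lfn] using congrFun h (i + 1)
      subst h0
      unfold Tt
      rw [ih M h1, ih M h1]

theorem stateAB (l : ℕ) (hl : 2 ≤ l) (q : List ℕ) : ∀ (a : ℕ) (x : ℤ), Dec a q →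
    ((a : ℤ) - l ≤ x → Tt l x (De l a q) ≤ Tt l (a - l + 1) q + l - 1 ∧
        Tt l (a - l + 1) q ≤ Tt l x (De l a q) + 1) ∧
    ((a : ℤ) - 2 * l ≤ x → x < (a : ℤ) - l → Tt l x (De l a q) ≤ Tt l (a - l + 1) q - 1 ∧
        Tt l (a - l + 1) q - 1 ≤ Tt l x (De l a q) + l) := by
  induction q with
  | nil =>
    intro a x _
    simp only [De, Tt]
    constructor
    · intro h; split_ifs <;> omega
    · intro h h'; split_ifs <;> omega
  | cons b q ih =>
    intro a x ⟨h1, h2, h3⟩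
    have e : ((a + 1 : ℕ) : ℤ) - l + 1 = (a : ℤ) - l + 1 + 1 := by push_cast; ring
    have hV : Tt l (a - l + 1) (b :: q) = if l + b ≤ a + 1 then l + Tt l (b - l + 1) q - 1
        else Tt l ((a + 1 : ℕ) - l + 1) q - 1 := by
      rw [e]
      conv_lhs => unfold Tt
      by_cases h : l + b ≤ a + 1
      · rw [if_pos h, if_pos (by omega)]
      · rw [if_neg h, if_neg (by omega)]
    rw [hV]
    unfold De
    by_cases h : l + b ≤ a + 1
    · rw [if_pos h, if_pos h]
      have I := fun x => ih b x h3
      constructor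
      · intro hx
        conv in (Tt l x _) => unfold Tt
        conv in (Tt l x _) => unfold Tt
        rw [if_pos (by omega)]
        have := (I (((a - l : ℕ) : ℤ) - l + 1)).1 (by omega)
        omega
      · intro hx hx'
        conv in (Tt l x _) => unfold Tt
        conv in (Tt l x _) => unfold Tt
        rw [if_neg (by omega)]
        have := (I (x + 1)).1 (by omega)
        omega
    · rw [if_neg h, if_neg h]
      have I := fun x => ih (a + 1) x (h3.mono (by omega))
      constructor
      · intro hx
        conv in (Tt l x _) => unfold Tt
        conv in (Tt l x _) => unfold Tt
        by_cases hb : ((b - 1 : ℕ) : ℤ) ≤ x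
        · rw [if_pos hb]
          have := (I (((b - 1 : ℕ) : ℤ) - l + 1)).2 (by omega) (by omega)
          omega
        · rw [if_neg hb]
          have := (I (x + 1)).1 (by omega)
          omega
      · intro hx hx'
        conv in (Tt l x _) => unfold Tt
        conv in (Tt l x _) => unfold Tt
        rw [if_neg (by omega)]
        have := (I (x + 1)).2 (by omega) (by omega)
        omega

/-! ### regularity of the edge removal -/

theorem regX (l : ℕ) (hl : 2 ≤ l) (b : ℕ) (hb : 2 ≤ b) (q : List ℕ) : ∀ (a k : ℕ), Dec b q → a + k + 1 < b + l →
    q.getD k 0 < b → (De l a q).getD k 0 < b - 1 := by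
  induction q with
  | nil =>
    intro a k _ h _
    have : (De l a []).getD k 0 ≤ a - l := (De_bound l (by omega) (a - l) a [] le_rfl trivial).getD_le k
    omega
  | cons c q ih =>
    intro a k hq h hk
    obtain ⟨h1, h2, h3⟩ := hq
    by_cases hc : l + c ≤ a + 1
    · have : (De l a (c :: q)).getD k 0 ≤ a - l :=
        (De_bound l (by omega) (a - l) a (c :: q) le_rfl ⟨by omega, h3.dec0⟩).getD_le k
      omega
    · unfold De
      rw [if_neg hc]
      cases k with
      | zero => simp at hk ⊢; omega
      | succ k =>
        simp only [List.getD_cons_succ] at hk ⊢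
        exact ih (a + 1) k (h3.mono h2) (by omega) hk

theorem regY (l : ℕ) (hl : 2 ≤ l) (b : ℕ) (hb : 2 ≤ b) (q : List ℕ) : ∀ (a k : ℕ), Dec b q → a < b + l →
    k + 2 ≤ l → b + l ≤ a + k + 1 →
    q.getD k 0 < b → (a + k + 1 = b + l → k ≠ 0 ∧ q.getD (k - 1) 0 < b) →
    (De l a q).getD k 0 < b - 1 := by
  induction q with
  | nil =>
    intro a k _ h _ h' _ hs
    simp only [De]
    cases k with
    | zero => exact absurd rfl (hs (by omega)).1
    | succ k => simp; omega
  | cons c q ih =>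
    intro a k hq h hkl h' hk hs
    obtain ⟨h1, h2, h3⟩ := hq
    unfold De
    by_cases hc : l + c ≤ a + 1
    · rw [if_pos hc]
      cases k with
      | zero => exact absurd rfl (hs (by omega)).1
      | succ k =>
        simp only [List.getD_cons_succ] at hk ⊢
        rcases Nat.lt_or_ge c b with hcb | hcb
        · have : (De l c q).getD k 0 ≤ c - 1 :=
            (De_dec0 l (by omega) c q h1 h3).getD_le k
          omega
        · obtain rfl : c = b := by omega
          exact regX l hl c hb q c k h3 (by omega) hk
    · rw [if_neg hc]
      cases k with
      | zero => simp at hk ⊢; omega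
      | succ k =>
        simp only [List.getD_cons_succ] at hk ⊢
        apply ih (a + 1) k (h3.mono h2) (by omega) (by omega) (by omega) hk
        intro he
        obtain ⟨-, h5⟩ := hs (by omega)
        cases k with
        | zero => simp at h5; omega
        | succ k => exact ⟨by omega, by simpa using h5⟩

theorem De_reg (l : ℕ) (hl : 2 ≤ l) (q : List ℕ) : ∀ a, 1 ≤ a → Dec a q → Reg l (a :: q) →
    Reg l (De l a q) := by
  induction q with
  | nil => intro a ha _ _; exact ⟨fun h => by simp only [List.getD_nil]; omega, trivial⟩
  | cons b q ih =>
    intro a ha hq hr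
    obtain ⟨h1, h2, h3⟩ := hq
    obtain ⟨r1, r2, r3⟩ := hr
    unfold De
    by_cases h : l + b ≤ a + 1
    · rw [if_pos h]
      refine ⟨fun h0 => ?_, ih b h1 h3 ⟨r2, r3⟩⟩
      rcases Nat.lt_or_ge b 2 with hb | hb
      · have : (De l b q).getD (l - 2) 0 ≤ b - 1 := (De_dec0 l hl b q h1 h3).getD_le _
        omega
      · have := regX l hl b hb q b (l - 2) h3 (by omega) (r2 (by omega))
        omega
    · rw [if_neg h]
      refine ⟨fun h0 => ?_, ih (a + 1) (by omega) (h3.mono (by omega))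
        ⟨fun _ => by have := h3.getD_le (l - 2); omega, r3⟩⟩
      have hr := r2 (by omega)
      apply regY l hl b (by omega) q (a + 1) (l - 2) h3 (by omega) (by omega) (by omega) hr
      intro he
      have r := r1 (by omega)
      rcases Nat.lt_or_ge 2 l with h' | h'
      · obtain ⟨m, rfl⟩ : ∃ m, l = m + 3 := ⟨l - 3, by omega⟩
        refine ⟨by omega, ?_⟩
        have e : m + 3 - 2 = m + 1 := by omega
        rw [e, List.getD_cons_succ] at r
        rw [e, Nat.add_sub_cancel]
        omega
      · obtain rfl : l = 2 := by omega
        simp at r; omega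

/-! ### adding an edge -/

theorem De_low (l : ℕ) (hl : 2 ≤ l) (q : List ℕ) : ∀ a k, q.getD k 0 ≤ (De l a q).getD k 0 + 1 := by
  induction q with
  | nil => intro a k; simp
  | cons b q ih =>
    intro a k
    unfold De
    split_ifs with h
    · cases k with
      | zero => simp; omega
      | succ k => simpa using ih b k
    · cases k with
      | zero => simp; omega
      | succ k => simpa using ih (a + 1) k

theorem De_low2 (l : ℕ) (b : ℕ) (q : List ℕ) : ∀ a k, (∀ i, i < k → b ≤ q.getD i 0) → 1 ≤ b →
    a + k + 1 ≤ l + b → min (b - 1) (a + k - l) ≤ (De l a q).getD k 0 := by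
  induction q with
  | nil =>
    intro a k h hb hk
    cases k with
    | zero => simp [De]
    | succ k => have := h 0 (by omega); simp at this; omega
  | cons c q ih =>
    intro a k h hb hk
    unfold De
    cases k with
    | zero => split_ifs <;> simp <;> omega
    | succ k =>
      have hc := h 0 (by omega)
      simp only [List.getD_cons_zero] at hc
      rw [if_neg (by omega), List.getD_cons_succ]
      have := ih (a + 1) k (fun i hi => by simpa using h (i + 1) (by omega)) hb (by omega)
      have e : a + 1 + k = a + (k + 1) := by omega
      rwa [e] at this

theorem getD_anti {a : ℕ} {q : List ℕ} (h : Dec0 a q) (i j : ℕ) (hij : i ≤ j) :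
    q.getD j 0 ≤ q.getD i 0 := by
  induction q generalizing a i j with
  | nil => simp
  | cons b q ih =>
    cases j with
    | zero => obtain rfl : i = 0 := by omega
              exact le_rfl
    | succ j =>
      cases i with
      | zero => simpa using h.2.getD_le j
      | succ i => simpa using ih h.2 i j (by omega)

/-- one step of adding an edge -/
theorem add_step (l : ℕ) (hl : 2 ≤ l) (n : ℕ) (hn : 1 ≤ n) (c : ℕ) (t : List ℕ) (hc : 1 ≤ c)
    (ht : Dec c t) (hr : Reg l (c :: t)) (hd : Dec0 n (De l c t))
    (hrn : Reg l (n :: De l c t)) :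
    ∃ c' t', 1 ≤ c' ∧ Dec c' t' ∧ Reg l (c' :: t') ∧ De l c' t' = n :: De l c t ∧
      t'.length = t.length + 1 := by
  have hh : c - l ≤ (De l c t).getD 0 0 := by
    have := De_low2 l (l + c + 1) t c 0 (by simp) (by omega) (by omega)
    omega
  have hh2 : (De l c t).getD 0 0 ≤ n := hd.getD_le 0
  rcases Nat.lt_or_ge n (c - 1) with h | h
  · refine ⟨c - 1, (n + 1) :: t, by omega, ⟨by omega, by omega, ?_⟩, ⟨?_, ?_, hr.2⟩, ?_, rfl⟩
    · cases t with
      | nil => trivial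
      | cons b t =>
        refine ⟨ht.1, ?_, ht.2.2⟩
        have := De_low l hl (b :: t) c 0
        simp only [List.getD_cons_zero] at this
        omega
    · intro _
      by_contra hcon
      push Not at hcon
      have hreg := hrn.1 (by omega)
      have := De_low2 l (n + 1) t c (l - 2) ?_ (by omega) ?_
      · rcases Nat.lt_or_ge 2 l with h' | h'
        · omega
        · omega
      · intro i hi
        obtain ⟨m, rfl⟩ : ∃ m, l = m + 3 := ⟨l - 3, by omega⟩
        have e : m + 3 - 2 = m + 1 := by omega
        rw [e, List.getD_cons_succ] at hcon
        have := getD_anti ht.dec0 i m (by omega)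
        omega
      · rcases Nat.lt_or_ge 2 l with h' | h'
        · obtain ⟨m, rfl⟩ : ∃ m, l = m + 3 := ⟨l - 3, by omega⟩
          have e : m + 3 - 2 = m + 1 := by omega
          rw [e, List.getD_cons_succ] at hcon
          have h1 := getD_anti ht.dec0 0 m (by omega)
          have := De_low _ hl t c 0
          omega
        · obtain rfl : l = 2 := by omega
          simp at hcon; omega
    · intro _
      have := De_low l hl t c (l - 2)
      have := hrn.1 (by omega)
      omega
    · have e : c - 1 + 1 = c := by omega
      conv_lhs => unfold De
      rw [if_neg (by omega), e]; rfl
  · refine ⟨n + l, c :: t, by omega, ⟨hc, by omega, ht⟩, ⟨?_, hr⟩, ?_, rfl⟩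
    · intro _
      have : (c :: t).getD (l - 2) 0 ≤ c := Dec0.getD_le (q := c :: t) ⟨le_rfl, ht.dec0⟩ _
      omega
    · conv_lhs => unfold De
      rw [if_pos (by omega)]; simp

theorem add_many (l : ℕ) (hl : 2 ≤ l) (c : ℕ) (t : List ℕ) (hc : 1 ≤ c)
    (ht : Dec c t) (hr : Reg l (c :: t)) (N : List ℕ) (m : ℕ) (hN : Dec0 m (N ++ De l c t))
    (hpos : ∀ n ∈ N, 1 ≤ n) (hrN : Reg l (N ++ De l c t)) :
    ∃ c' t', 1 ≤ c' ∧ Dec c' t' ∧ Reg l (c' :: t') ∧ De l c' t' = N ++ De l c t ∧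
      t'.length = t.length + N.length := by
  induction N generalizing m with
  | nil => exact ⟨c, t, hc, ht, hr, rfl, rfl⟩
  | cons n N ih =>
    obtain ⟨c1, t1, a1, a2, a3, a4, a5⟩ := ih n hN.2 (fun x hx => hpos x (by simp [hx])) hrN.2
    have := add_step l hl n (hpos n (by simp)) c1 t1 a1 a2 a3 (by rw [a4]; exact hN.2)
      (by rw [a4]; exact hrN)
    obtain ⟨c2, t2, b1, b2, b3, b4, b5⟩ := this
    exact ⟨c2, t2, b1, b2, b3, by rw [b4, a4]; rfl, by simp; omega⟩

/-! ### Bridging functions and lists -/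

theorem plen_eq {p : ℕ → ℕ} {n : ℕ} (h0 : p n = 0) (h1 : ∀ i, i < n → p i ≠ 0) : plen p = n := by
  unfold plen
  apply le_antisymm
  · exact Nat.sInf_le h0
  · by_contra hcon
    push Not at hcon
    exact h1 _ hcon (Nat.sInf_mem (s := {N | p N = 0}) ⟨n, h0⟩)

theorem Dec.getD_pos {a : ℕ} {q : List ℕ} (h : Dec a q) (i : ℕ) (hi : i < q.length) :
    1 ≤ q.getD i 0 := by
  induction q generalizing a i with
  | nil => simp at hi
  | cons b q ih =>
    cases i with
    | zero => simpa using h.1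
    | succ i => simpa using ih h.2.2 i (by simpa using hi)

theorem plen_lfn {a : ℕ} {q : List ℕ} (h : Dec a q) : plen (lfn q) = q.length := by
  apply plen_eq
  · simp [lfn]
  · intro i hi
    have := h.getD_pos i hi
    simp only [lfn]; omega

theorem exists_list_aux (N : ℕ) : ∀ p : ℕ → ℕ, (∀ i j, i ≤ j → p j ≤ p i) → (∀ i, N ≤ i → p i = 0) →
    ∃ L, Dec (p 0) L ∧ lfn L = p := by
  induction N with
  | zero =>
    intro p _ h
    refine ⟨[], trivial, ?_⟩
    funext i
    simp [lfn, h i]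
  | succ N ih =>
    intro p hp h
    by_cases h0 : p 0 = 0
    · refine ⟨[], trivial, ?_⟩
      funext i
      have := hp 0 i (by omega)
      simp [lfn]; omega
    · obtain ⟨L, h1, h2⟩ := ih (fun i => p (i + 1)) (fun i j hij => hp _ _ (by omega))
        (fun i hi => h _ (by omega))
      refine ⟨p 0 :: L, ⟨by omega, le_rfl, h1.mono (hp _ _ (by omega))⟩, ?_⟩
      funext i
      cases i with
      | zero => rfl
      | succ i => exact congrFun h2 i

theorem exists_list {p : ℕ → ℕ} (hp : IsPartition p) : ∃ L, Dec (p 0) L ∧ lfn L = p := by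
  obtain ⟨h1, N, h2⟩ := hp
  exact exists_list_aux N p h1 h2

theorem lfn_isPartition {m : ℕ} {L : List ℕ} (h : Dec0 m L) : IsPartition (lfn L) :=
  ⟨fun i j hij => getD_anti h i j hij, L.length, fun i hi => by simp [lfn, hi]⟩

theorem reg_of_isLRegular {l : ℕ} (hl : 2 ≤ l) {m : ℕ} {L : List ℕ} (h : Dec0 m L)
    (hr : IsLRegular l (lfn L)) : Reg l L := by
  induction L generalizing m with
  | nil => trivial
  | cons a q ih =>
    refine ⟨fun h0 => ?_, ih h.2 ?_⟩
    · have h1 := hr 0 (by simpa [lfn] using h0)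
      have e : 0 + l - 1 = (l - 2) + 1 := by omega
      rw [e] at h1
      simp only [lfn, List.getD_cons_succ, List.getD_cons_zero] at h1
      have := h.2.getD_le (l - 2)
      omega
    · intro i hi
      have h1 := hr (i + 1) (by simpa [lfn] using hi)
      have e : i + 1 + l - 1 = (i + l - 1) + 1 := by omega
      rw [e] at h1
      simpa [lfn] using h1

theorem isLRegular_of_reg {l : ℕ} (hl : 2 ≤ l) {L : List ℕ} (hr : Reg l L) :
    IsLRegular l (lfn L) := by
  induction L with
  | nil => intro i hi; simp [lfn] at hi
  | cons a q ih =>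
    intro i hi
    cases i with
    | zero =>
      have e : 0 + l - 1 = (l - 2) + 1 := by omega
      rw [e]
      have := hr.1 (by simpa [lfn] using hi)
      simp only [lfn, List.getD_cons_succ, List.getD_cons_zero]
      omega
    | succ i =>
      have e : i + 1 + l - 1 = (i + l - 1) + 1 := by omega
      rw [e]
      have := ih hr.2 i (by simpa [lfn] using hi)
      simpa [lfn] using this

theorem pdeg_lfn {m : ℕ} {L : List ℕ} (h : Dec0 m L) : pdeg (lfn L) = L.sum := by
  have hle : plen (lfn L) ≤ L.length := Nat.sInf_le (by simp [lfn])
  have h0 : lfn L (plen (lfn L)) = 0 :=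
    Nat.sInf_mem (s := {N | lfn L N = 0}) ⟨L.length, by simp [lfn]⟩
  have h1 : pdeg (lfn L) = ∑ i ∈ Finset.range L.length, lfn L i := by
    unfold pdeg
    apply Finset.sum_subset
    · intro i hi; simp at hi ⊢; omega
    · intro i _ hi
      simp at hi
      have := (lfn_isPartition h).1 _ _ hi
      omega
  rw [h1]
  clear h1 h0 hle h
  induction L with
  | nil => simp
  | cons a q ih =>
    rw [List.length_cons, Finset.sum_range_succ', List.sum_cons, ← ih, add_comm]
    rfl

theorem De_nocut (l a : ℕ) (q1 r : List ℕ)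
    (h : ∀ i, i < q1.length → a + i + 1 < l + q1.getD i 0) :
    De l a (q1 ++ r) = q1.map (· - 1) ++ De l (a + q1.length) r := by
  induction q1 generalizing a with
  | nil => simp
  | cons b q1 ih =>
    have h0 := h 0 (by simp)
    simp only [List.getD_cons_zero] at h0
    rw [List.cons_append]
    conv_lhs => unfold De
    rw [if_neg (by omega), ih]
    · simp only [List.map_cons, List.cons_append, List.length_cons]
      congr 3; omega
    · intro i hi
      have := h (i + 1) (by simpa using hi)
      simp only [List.getD_cons_succ] at this
      omega

theorem Ee_nocut (l a : ℕ) (q1 r : List ℕ)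
    (h : ∀ i, i < q1.length → a + i + 1 < l + q1.getD i 0) :
    Ee l a (q1 ++ r) = Ee l (a + q1.length) r := by
  induction q1 generalizing a with
  | nil => simp
  | cons b q1 ih =>
    have h0 := h 0 (by simp)
    simp only [List.getD_cons_zero] at h0
    rw [List.cons_append]
    conv_lhs => unfold Ee
    rw [if_neg (by omega), ih]
    · simp only [List.length_cons]
      congr 1; omega
    · intro i hi
      have := h (i + 1) (by simpa using hi)
      simp only [List.getD_cons_succ] at this
      omega

theorem Dec.initial {a : ℕ} {q r : List ℕ} (h : Dec a (q ++ r)) : Dec a q := by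
  induction q generalizing a with
  | nil => trivial
  | cons b q ih => exact ⟨h.1, h.2.1, ih h.2.2⟩

theorem Dec.final {a : ℕ} {q r : List ℕ} (h : Dec a (q ++ r)) : Dec a r := by
  induction q generalizing a with
  | nil => exact h
  | cons b q ih => exact (ih h.2.2).mono h.2.1

theorem Reg.final {l : ℕ} {q r : List ℕ} (h : Reg l (q ++ r)) : Reg l r := by
  induction q with
  | nil => exact h
  | cons b q ih => exact ih h.2

theorem Reg.initial {l : ℕ} {q r : List ℕ} (h : Reg l (q ++ r)) : Reg l q := by
  induction q with
  | nil => trivial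
  | cons b q ih =>
    refine ⟨fun h0 => ?_, ih h.2⟩
    have h1 : (q ++ r).getD (l - 2) 0 < b := h.1 h0
    rcases Nat.lt_or_ge (l - 2) q.length with h' | h'
    · rwa [List.getD_append _ _ _ _ h'] at h1
    · rw [List.getD_eq_default _ _ h']; omega

/-- the first segment -/
theorem seg (l : ℕ) (hl : 2 ≤ l) (a : ℕ) (q : List ℕ) (hq : Dec a q)
    (he : l < a + q.length) :
    ∃ q1 r, q = q1 ++ r ∧ firstSeg l (lfn (a :: q)) = q1.length + 1 ∧
      (∀ i, i < q1.length → a + i + 1 < l + q1.getD i 0) ∧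
      l + r.getD 0 0 ≤ a + q1.length + 1 := by
  have hbd := fun k => hq.getD_le k
  have hne : (q.length + 1) ∈ {h | 1 ≤ h ∧ l ≤ lfn (a :: q) 0 - lfn (a :: q) h + h} := by
    simp [lfn]; omega
  have hmem := Nat.sInf_mem ⟨_, hne⟩
  have hle : firstSeg l (lfn (a :: q)) ≤ q.length + 1 := Nat.sInf_le hne
  have hmin : ∀ j, j < firstSeg l (lfn (a :: q)) → _ := fun j hj => Nat.notMem_of_lt_sInf hj
  obtain ⟨h, hh⟩ : ∃ h, firstSeg l (lfn (a :: q)) = h + 1 :=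
    ⟨firstSeg l (lfn (a :: q)) - 1, by have := hmem.1; unfold firstSeg; omega⟩
  have hmem2 : l ≤ a - q.getD h 0 + (h + 1) := by
    have := hmem.2
    change l ≤ lfn (a :: q) 0 - lfn (a :: q) (firstSeg l (lfn (a :: q))) +
      firstSeg l (lfn (a :: q)) at this
    rw [hh] at this
    simpa [lfn] using this
  have hlen : (q.take h).length = h := by simp; omega
  refine ⟨q.take h, q.drop h, (List.take_append_drop h q).symm, by rw [hlen, hh], ?_, ?_⟩
  · intro i hi
    rw [hlen] at hi
    have h1 := hmin (i + 1) (by omega)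
    have h2 : (q.take h).getD i 0 = q.getD i 0 := by
      simp [List.getD_eq_getElem?_getD, List.getElem?_take, hi]
    rw [h2]
    have h3 := hbd i
    by_contra hcon
    apply h1
    simp only [lfn, Set.mem_setOf_eq, List.getD_cons_succ, List.getD_cons_zero]
    omega
  · rw [hlen]
    have h2 : (q.drop h).getD 0 0 = q.getD h 0 := by
      simp [List.getD_eq_getElem?_getD, List.getElem?_drop]
    have h3 := hbd h
    omega

theorem lfn_shift (a : ℕ) (q1 r : List ℕ) :
    (fun j => lfn (a :: (q1 ++ r)) (j + (q1.length + 1))) = lfn r := by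
  funext j
  have e : j + (q1.length + 1) = (q1.length + j) + 1 := by omega
  simp only [lfn, e, List.getD_cons_succ]
  rw [List.getD_append_right _ _ _ _ (by omega), Nat.add_sub_cancel_left]

theorem getD_map_pred (q : List ℕ) (i : ℕ) : (q.map (· - 1)).getD i 0 = q.getD i 0 - 1 := by
  simp only [List.getD_eq_getElem?_getD, List.getElem?_map]
  cases q[i]? <;> simp

theorem removeAux_lfn (l : ℕ) (hl : 2 ≤ l) (n : ℕ) : ∀ (a : ℕ) (q : List ℕ), 1 ≤ a → Dec a q →
    q.length + 1 ≤ n → removeLEdgeAux l n (lfn (a :: q)) = lfn (De l a q) := by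
  induction n with
  | zero => intro a q _ _ h; omega
  | succ n ih =>
    intro a q ha hq hn
    have h0 : lfn (a :: q) 0 = a := rfl
    have hpl : plen (lfn (a :: q)) = q.length + 1 :=
      plen_lfn (a := a) (q := a :: q) ⟨ha, le_rfl, hq⟩
    unfold removeLEdgeAux
    rw [h0, hpl, if_neg (by omega)]
    by_cases he : a + (q.length + 1) - 1 ≤ l
    · rw [if_pos he]
      have := De_nocut l a q [] (fun i hi => by have := hq.getD_pos i hi; omega)
      rw [List.append_nil] at this
      rw [this]
      have e : a + q.length - l = 0 := by omega
      funext i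
      simp only [De, lfn, e, List.getD_cons_succ]
      rcases Nat.lt_or_ge i q.length with h | h
      · rw [List.getD_append _ _ _ _ (by simpa using h), getD_map_pred]
      · rw [List.getD_append_right _ _ _ _ (by simpa using h), List.getD_eq_default _ _ h]
        cases (i - (q.map (· - 1)).length) <;> simp
    · rw [if_neg he]
      obtain ⟨q1, r, rfl, hs, hnc, hcut⟩ := seg l hl a q hq (by omega)
      rw [hs, lfn_shift, De_nocut l a q1 r hnc]
      have hr : ∃ X, De l (a + q1.length) r = (a + q1.length - l) :: X ∧
          removeLEdgeAux l n (lfn r) = lfn X := by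
        cases r with
        | nil =>
          refine ⟨[], rfl, ?_⟩
          cases n with
          | zero => funext i; simp [removeLEdgeAux, lfn]
          | succ n =>
            have : lfn [] 0 = 0 := rfl
            unfold removeLEdgeAux
            rw [if_pos this]
            funext i; simp [lfn]
        | cons b q2 =>
          simp only [List.getD_cons_zero] at hcut
          have hb := hq.final
          refine ⟨De l b q2, ?_, ih b q2 hb.1 hb.2.2 ?_⟩
          · conv_lhs => unfold De
            rw [if_pos hcut]
          · simp at hn; omega
      obtain ⟨X, hX1, hX2⟩ := hr
      rw [hX1, hX2]
      funext i
      simp only [lfn]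
      have hlm : (q1.map (· - 1)).length = q1.length := by simp
      rcases Nat.lt_trichotomy i q1.length with h | h | h
      · rw [if_pos (by omega), List.getD_append _ _ _ _ (by rw [hlm]; exact h), getD_map_pred,
          List.getD_cons_succ, List.getD_append _ _ _ _ h]
      · subst h
        rw [if_neg (by omega), if_pos rfl, List.getD_append_right _ _ _ _ (by rw [hlm]), hlm,
          Nat.sub_self, List.getD_cons_zero]
        omega
      · rw [if_neg (by omega), if_neg (by omega), List.getD_append_right _ _ _ _ (by rw [hlm]; omega),
          hlm]
        have e : i - q1.length = (i - (q1.length + 1)) + 1 := by omega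
        rw [e, List.getD_cons_succ]

theorem plen_cons {a : ℕ} {q : List ℕ} (ha : 1 ≤ a) (hq : Dec a q) :
    plen (lfn (a :: q)) = q.length + 1 :=
  plen_lfn (a := a) (q := a :: q) ⟨ha, le_rfl, hq⟩

theorem remove_lfn (l : ℕ) (hl : 2 ≤ l) (a : ℕ) (q : List ℕ) (ha : 1 ≤ a) (hq : Dec a q) :
    removeLEdge l (lfn (a :: q)) = lfn (De l a q) := by
  unfold removeLEdge
  rw [plen_cons ha hq]
  exact removeAux_lfn l hl _ a q ha hq le_rfl

theorem elen_lfn (l : ℕ) (hl : 2 ≤ l) (a : ℕ) (q : List ℕ) (ha : 1 ≤ a) (hq : Dec a q) :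
    elen l (lfn (a :: q)) = Ee l a q := by
  unfold elen
  rw [remove_lfn l hl a q ha hq, pdeg_lfn (De_dec0 l hl a q ha hq),
    pdeg_lfn (m := a) (L := a :: q) ⟨le_rfl, hq.dec0⟩]
  have := De_sum l hl a q hq
  simp only [List.sum_cons]; omega

theorem mullLen_lfn (l : ℕ) (hl : 2 ≤ l) (a : ℕ) (q : List ℕ) (ha : 1 ≤ a) (hq : Dec a q) :
    (mullLen l (lfn (a :: q)) : ℤ) = (l : ℤ) - 1 + Tt l (a - l + 1) q := by
  rw [Tt_eq l hl a q ha hq]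
  have := Ee_ge l hl a q 0 (by omega) (by omega) (by simpa using hq)
  unfold mullLen
  rw [elen_lfn l hl a q ha hq, plen_cons ha hq]
  split_ifs <;> push_cast <;> omega

theorem mullLen_pos (l : ℕ) (hl : 2 ≤ l) (a : ℕ) (q : List ℕ) (ha : 1 ≤ a) (hq : Dec a q)
    (hr : Reg l (a :: q)) : 1 ≤ mullLen l (lfn (a :: q)) := by
  have h1 := mullLen_lfn l hl a q ha hq
  have h2 := W_pos l hl a q 0 (by omega) (by omega) (by simpa using hq)
    (by simpa using hr.1 (by omega))
  push_cast at h2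
  omega

/-- existence of the partition in the Mullineux recursion -/
theorem exists_add (l : ℕ) (hl : 2 ≤ l) (v : ℕ → ℕ) (hv : IsPartition v) (hr : IsLRegular l v)
    (R : ℕ) (h1 : plen v ≤ R) (h2 : R ≤ plen v + l) (hR : 1 ≤ R) :
    ∃ μ, IsPartition μ ∧ IsLRegular l μ ∧ removeLEdge l μ = v ∧ plen μ = R := by
  obtain ⟨N, hN, rfl⟩ := exists_list hv
  rw [plen_lfn hN] at h1 h2
  have hrN := reg_of_isLRegular hl hN.dec0 hr
  have hmem : ∀ {m : ℕ} {N : List ℕ}, Dec m N → ∀ n ∈ N, 1 ≤ n := by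
    intro m N
    induction N generalizing m with
    | nil => intro _ n hn; simp at hn
    | cons b N ih =>
      intro h n hn
      rcases List.mem_cons.1 hn with rfl | hn
      · exact h.1
      · exact ih h.2.2 n hn
  suffices H : ∃ c t, 1 ≤ c ∧ Dec c t ∧ Reg l (c :: t) ∧ lfn (De l c t) = lfn N ∧
      t.length + 1 = R by
    obtain ⟨c, t, a1, a2, a3, a4, a5⟩ := H
    refine ⟨lfn (c :: t), lfn_isPartition (m := c) ⟨le_rfl, a2.dec0⟩, isLRegular_of_reg hl a3, ?_,
      ?_⟩
    · rw [remove_lfn l hl c t a1 a2, a4]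
    · rw [plen_cons a1 a2, a5]
  rcases Nat.eq_or_lt_of_le h1 with h | h
  · rcases List.eq_nil_or_concat N with rfl | ⟨N', d, rfl⟩
    · simp at h; omega
    · rw [List.concat_eq_append] at *
      have hd : De l (d + l) [] = [d] := by simp [De]
      obtain ⟨c, t, a1, a2, a3, a4, a5⟩ := add_many l hl (d + l) [] (by omega) trivial
        ⟨fun _ => by simp only [List.getD_nil]; omega, trivial⟩ N' (lfn (N' ++ [d]) 0)
        (by rw [hd]; exact hN.dec0) (hmem hN.initial) (by rw [hd]; exact hrN)
      refine ⟨c, t, a1, a2, a3, by rw [a4, hd], ?_⟩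
      simp at h a5; omega
  · obtain ⟨m, hm⟩ : ∃ m, R = N.length + m + 1 := ⟨R - N.length - 1, by omega⟩
    have hD1 : ∀ m, Dec 1 (List.replicate m 1) := by
      intro m
      induction m with
      | zero => trivial
      | succ m ih => exact ⟨le_rfl, le_rfl, ih⟩
    have hR1 : ∀ m, m + 1 ≤ l → Reg l (List.replicate m 1) := by
      intro m
      induction m with
      | zero => intro _; trivial
      | succ m ih =>
        intro hm
        refine ⟨fun _ => ?_, ih (by omega)⟩
        rw [List.getD_eq_default _ _ (by simp; omega)]; omega
    have hz : Dec0 0 (De l 2 (List.replicate m 1)) :=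
      De_bound l hl 0 2 _ (by omega) (hD1 m).dec0
    have hz0 : ∀ i, (De l 2 (List.replicate m 1)).getD i 0 = 0 := fun i => by
      have := hz.getD_le i; omega
    have hfn : lfn (N ++ De l 2 (List.replicate m 1)) = lfn N := by
      funext i
      simp only [lfn]
      rcases Nat.lt_or_ge i N.length with h | h
      · rw [List.getD_append _ _ _ _ h]
      · rw [List.getD_append_right _ _ _ _ h, hz0, List.getD_eq_default _ _ h]
    have happ : ∀ {k : ℕ} (N : List ℕ), Dec0 k N →
        Dec0 k (N ++ De l 2 (List.replicate m 1)) := by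
      intro k N
      induction N generalizing k with
      | nil => intro _; exact hz.mono (by omega)
      | cons b N ih => intro h; exact ⟨h.1, ih h.2⟩
    have hd0 := happ N hN.dec0
    obtain ⟨c, t, a1, a2, a3, a4, a5⟩ := add_many l hl 2 (List.replicate m 1) (by omega)
      ((hD1 m).mono (by omega))
      ⟨fun _ => by have := (hD1 m).getD_le (l - 2); omega, hR1 m (by omega)⟩ N (lfn N 0)
      hd0 (hmem hN)
      (reg_of_isLRegular hl hd0 (by rw [hfn]; exact hr))
    refine ⟨c, t, a1, a2, a3, by rw [a4, hfn], ?_⟩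
    simp at a5; omega

theorem lfn_nil : lfn [] = fun _ => 0 := by funext i; simp [lfn]

theorem mullAux_spec (l : ℕ) (hl : 2 ≤ l) (n : ℕ) : ∀ p : ℕ → ℕ, IsPartition p → IsLRegular l p →
    pdeg p ≤ n → IsPartition (mullAux l n p) ∧ IsLRegular l (mullAux l n p) ∧
      plen (mullAux l n p) = if p 0 = 0 then 0 else mullLen l p := by
  have hzero : IsPartition (fun _ => 0) ∧ IsLRegular l (fun _ => 0) ∧
      plen (fun _ => 0) = 0 :=
    ⟨⟨fun _ _ _ => le_rfl, 0, fun _ _ => rfl⟩, fun i h => absurd rfl h,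
      plen_eq rfl (fun i hi => by omega)⟩
  induction n with
  | zero =>
    intro p hp hr hn
    obtain ⟨L, hL, hLp⟩ := exists_list hp
    have h0 : p 0 = 0 := by
      cases L with
      | nil => rw [← hLp]; rfl
      | cons a q =>
        rw [← hLp, pdeg_lfn (m := lfn (a :: q) 0) (by rw [hLp]; exact hL.dec0)] at hn
        have := hL.1
        simp at hn; omega
    rw [if_pos h0]
    exact hzero
  | succ n ih =>
    intro p hp hr hn
    unfold mullAux
    by_cases h0 : p 0 = 0
    · rw [if_pos h0, if_pos h0]; exact hzero
    · rw [if_neg h0, if_neg h0]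
      obtain ⟨L, hL, rfl⟩ := exists_list hp
      cases L with
      | nil => exact absurd rfl h0
      | cons a q =>
        have ha := hL.1
        have hq := hL.2.2
        have hreg := reg_of_isLRegular hl hL.dec0 hr
        have hrem := remove_lfn l hl a q ha hq
        have hd0 := De_dec0 l hl a q ha hq
        have hdreg := De_reg l hl q a ha hq hreg
        have hvp : IsPartition (removeLEdge l (lfn (a :: q))) := by
          rw [hrem]; exact lfn_isPartition hd0
        have hvr : IsLRegular l (removeLEdge l (lfn (a :: q))) := by
          rw [hrem]; exact isLRegular_of_reg hl hdreg
        have hdeg : pdeg (removeLEdge l (lfn (a :: q))) ≤ n := by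
          rw [pdeg_lfn hL.dec0] at hn
          rw [hrem, pdeg_lfn hd0]
          have h3 := De_sum l hl a q hq
          have h4 := Ee_ge l hl a q 0 (by omega) (by omega) (by simpa using hq)
          simp at hn; omega
        obtain ⟨i1, i2, i3⟩ := ih _ hvp hvr hdeg

        have hbd : (plen (mullAux l n (removeLEdge l (lfn (a :: q)))) : ℤ) =
            Tt l (a : ℤ) (De l a q) := by
          rw [i3]
          obtain ⟨M, hM, hMv⟩ := exists_list hvp
          rw [hrem] at hMv
          rw [hrem, ← hMv, ← Tt_congr l hl M _ hMv]
          cases M with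
          | nil => simp [lfn, Tt]
          | cons b M =>
            have hb := hM.1
            have e : lfn (b :: M) 0 = b := rfl
            have hba : b ≤ a - 1 := by
              have := hd0.getD_le 0
              have h5 := congrFun hMv 0
              simp only [lfn, List.getD_cons_zero] at h5
              omega
            rw [e, if_neg (by omega), mullLen_lfn l hl b M hb hM.2.2]
            conv_rhs => unfold Tt
            rw [if_pos (by omega)]
            ring
        have hB := (stateAB l hl q a (a : ℤ) hq).1 (by omega)
        have hS := mullLen_lfn l hl a q ha hq
        have hex := exists_add l hl _ i1 i2 (mullLen l (lfn (a :: q))) (by omega) (by omega)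
          (mullLen_pos l hl a q ha hq hreg)
        have := Classical.epsilon_spec hex
        exact ⟨this.1, this.2.1, this.2.2.2⟩

theorem plen_mull (l : ℕ) (hl : 2 ≤ l) (a : ℕ) (q : List ℕ) (ha : 1 ≤ a) (hq : Dec a q)
    (hr : Reg l (a :: q)) : plen (mull l (lfn (a :: q))) = mullLen l (lfn (a :: q)) := by
  have := (mullAux_spec l hl (pdeg (lfn (a :: q))) (lfn (a :: q))
    (lfn_isPartition (m := a) ⟨le_rfl, hq.dec0⟩) (isLRegular_of_reg hl hr) le_rfl).2.2
  have e : lfn (a :: q) 0 = a := rfl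
  rw [e, if_neg (by omega)] at this
  exact this

theorem Tt_nocut (l a : ℕ) (q1 r : List ℕ)
    (h : ∀ i, i < q1.length → a + i + 1 < l + q1.getD i 0) :
    Tt l (a - l + 1) (q1 ++ r) = Tt l ((a + q1.length : ℕ) - l + 1) r - q1.length := by
  induction q1 generalizing a with
  | nil => simp
  | cons b q1 ih =>
    have h0 := h 0 (by simp)
    simp only [List.getD_cons_zero] at h0
    rw [List.cons_append]
    conv_lhs => unfold Tt
    have e : ((a + 1 : ℕ) : ℤ) - l + 1 = (a : ℤ) - l + 1 + 1 := by push_cast; ring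
    rw [if_neg (by omega), ← e, ih]
    · have e2 : a + 1 + q1.length = a + (b :: q1).length := by simp; omega
      rw [e2]; simp; ring
    · intro i hi
      have := h (i + 1) (by simpa using hi)
      simp only [List.getD_cons_succ] at this
      omega

theorem comps_sum (l : ℕ) (hl : 2 ≤ l) (n : ℕ) : ∀ (a : ℕ) (q : List ℕ), 1 ≤ a → Dec a q →
    Reg l (a :: q) → q.length + 1 ≤ n →
    ((mullCompsAux l n (lfn (a :: q))).map fun c => plen (mull l c)).sum =
      mullLen l (lfn (a :: q)) := by
  induction n with
  | zero => intro a q _ _ _ h; omega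
  | succ n ih =>
    intro a q ha hq hr hn
    have e0 : lfn (a :: q) 0 = a := rfl
    unfold mullCompsAux
    rw [e0, if_neg (by omega), elen_lfn l hl a q ha hq]
    by_cases he : Ee l a q ≤ l
    · rw [if_pos he]
      simp [plen_mull l hl a q ha hq hr]
    · rw [if_neg he]
      have hlt : l < a + q.length := by
        by_contra hcon
        apply he
        have := Ee_nocut l a q [] (fun i hi => by have := hq.getD_pos i hi; omega)
        rw [List.append_nil] at this
        rw [this]
        exact min_le_right _ _
      obtain ⟨q1, r, rfl, hs, hnc, hcut⟩ := seg l hl a q hq hlt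
      rw [hs, lfn_shift]
      cases r with
      | nil =>
        exfalso
        apply he
        rw [Ee_nocut l a q1 [] hnc]
        exact min_le_right _ _
      | cons b q2 =>
        have hb := hq.final
        simp only [List.getD_cons_zero] at hcut
        have hfirst : (fun i => if i < q1.length + 1 then lfn (a :: (q1 ++ b :: q2)) i else 0) =
            lfn (a :: q1) := by
          funext i
          cases i with
          | zero => simp [lfn]
          | succ i =>
            simp only [lfn, List.getD_cons_succ]
            split_ifs with h
            · rw [List.getD_append _ _ _ _ (by omega)]
            · rw [List.getD_eq_default _ _ (by omega)]
        have hr1 : Reg l (a :: q1) := Reg.initial (q := a :: q1) (r := b :: q2) hr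
        have hr2 : Reg l (b :: q2) := Reg.final (q := a :: q1) (r := b :: q2) hr
        rw [hfirst, List.map_cons, List.sum_cons, ih b q2 hb.1 hb.2.2 hr2
          (by simp at hn; omega), plen_mull l hl a q1 ha hq.initial hr1]
        have m1 := mullLen_lfn l hl a q1 ha hq.initial
        have m2 := mullLen_lfn l hl b q2 hb.1 hb.2.2
        have m3 := mullLen_lfn l hl a _ ha hq
        rw [Tt_nocut l a q1 _ hnc] at m3
        have t1 := Tt_nocut l a q1 [] hnc
        rw [List.append_nil] at t1
        rw [t1] at m1
        simp only [Tt] at m1 m3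
        rw [if_pos (by omega)] at m3
        omega

/-- If `μ` is a nonzero `l`-regular partition with Mullineux components `μ¹, …, μᵗ`,
then `ℓ(Mull(μ)) = ℓ(Mull(μ¹)) + … + ℓ(Mull(μᵗ))`. -/
theorem plen_mull_eq_sum_over_comps (l : ℕ) (hl : 2 ≤ l) (p : ℕ → ℕ)
    (hp : IsPartition p) (hne : p 0 ≠ 0) (hreg : IsLRegular l p) :
    plen (mull l p) = ((mullComps l p).map fun c => plen (mull l c)).sum := by
  obtain ⟨L, hL, rfl⟩ := exists_list hp
  cases L with
  | nil => exact absurd rfl hne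
  | cons a q =>
    have hr := reg_of_isLRegular hl hL.dec0 hreg
    rw [plen_mull l hl a q hL.1 hL.2.2 hr]
    unfold mullComps
    rw [plen_cons hL.1 hL.2.2, comps_sum l hl _ a q hL.1 hL.2.2 hr le_rfl]
end
end

section
/- Let λ be a nonzero edge l-connected partition such that e_l(λ) is not divisible by l, and let H be a skew l-hook of λ. Then the partition λ_H obtained by removing H is edge l-connected, e_l(λ_H) is not divisible by l, and (λ_H)_1 = λ_1 (the first part is unchanged). -/
noncomputable section

/-- beta set is full on the runner of the first part -/
def FullRunner (l : ℕ) (p : ℕ → ℕ) : Prop :=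
  ∀ k : ℕ, ∃ i : ℕ, p i + k * l = p 0 + i

theorem pl_lt {p : ℕ → ℕ} (hp : IsPartition p) (i : ℕ) : p i ≠ 0 ↔ i < plen p := by
  obtain ⟨hm, N, hN⟩ := hp
  have hne : {N | p N = 0}.Nonempty := ⟨N, hN N le_rfl⟩
  have h0 : p (plen p) = 0 := Nat.sInf_mem hne
  constructor
  · intro h
    by_contra hc
    have := hm (plen p) i (by omega)
    omega
  · intro h hc
    have : plen p ≤ i := Nat.sInf_le hc
    omega

theorem pl_zero {p : ℕ → ℕ} (hp : IsPartition p) (i : ℕ) : p i = 0 ↔ plen p ≤ i := by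
  have := pl_lt hp i
  constructor
  · intro h; by_contra hc; exact this.2 (by omega) h
  · intro h; by_contra hc; have := this.1 hc; omega

theorem tail_part {p : ℕ → ℕ} (hp : IsPartition p) (h : ℕ) :
    IsPartition (fun j => p (j + h)) := by
  obtain ⟨hm, N, hN⟩ := hp
  exact ⟨fun i j hij => hm _ _ (by omega), N, fun i hi => hN _ (by omega)⟩

theorem tail_plen {p : ℕ → ℕ} (hp : IsPartition p) (h : ℕ) :
    plen (fun j => p (j + h)) = plen p - h := by
  have ht := tail_part hp h
  apply le_antisymm
  · exact (pl_zero ht _).1 ((pl_zero hp _).2 (by omega))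
  · have := (pl_zero ht _).2 le_rfl
    have := (pl_zero hp _).1 this
    omega

theorem pdeg_eq {p : ℕ → ℕ} (hp : IsPartition p) (N : ℕ) (hN : plen p ≤ N) :
    pdeg p = ∑ i ∈ Finset.range N, p i := by
  unfold pdeg
  apply Finset.sum_subset
  · intro x; simp; omega
  · intro x _ hx
    simp at hx
    exact (pl_zero hp x).2 hx

theorem seg_spec {l : ℕ} {p : ℕ → ℕ} (hp : IsPartition p) (he : l < p 0 + plen p - 1)
    (h0 : p 0 ≠ 0) :
    1 ≤ firstSeg l p ∧ firstSeg l p ≤ plen p ∧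
      l + p (firstSeg l p) ≤ p 0 + firstSeg l p ∧
      (∀ i, 1 ≤ i → i < firstSeg l p → p 0 + i < l + p i) ∧
      l + 1 ≤ p 0 + firstSeg l p := by
  have hpl := (pl_lt hp 0).1 h0
  have hz := (pl_zero hp (plen p)).2 le_rfl
  have hmem : plen p ∈ {h | 1 ≤ h ∧ l ≤ p 0 - p h + h} := by
    simp only [Set.mem_ofPred_eq]; omega
  have h1 := Nat.sInf_mem ⟨_, hmem⟩
  have h2 := Nat.sInf_le hmem
  have h3 : ∀ i, 1 ≤ i → i < firstSeg l p → p 0 + i < l + p i := by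
    intro i hi hlt
    have := Nat.notMem_of_lt_sInf hlt
    simp only [Set.mem_ofPred_eq] at this
    have := hp.1 0 i (by omega)
    omega
  change 1 ≤ firstSeg l p ∧ l ≤ p 0 - p (firstSeg l p) + firstSeg l p at h1
  change firstSeg l p ≤ plen p at h2
  have h4 := hp.1 0 (firstSeg l p) (by omega)
  refine ⟨h1.1, h2, by omega, h3, ?_⟩
  by_cases hh : p (firstSeg l p) = 0
  · have := (pl_zero hp _).1 hh
    omega
  · omega

theorem rem_main {l : ℕ} (hl : 2 ≤ l) : ∀ (n : ℕ) (p : ℕ → ℕ), IsPartition p → plen p ≤ n →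
    (∀ i, removeLEdgeAux l n p i ≤ p i - 1) ∧
    (∀ i, removeLEdgeAux l n p (i + 1) ≤ removeLEdgeAux l n p i) ∧
    removeLEdgeAux l n p = removeLEdgeAux l (plen p) p := by
  intro n
  induction n using Nat.strong_induction_on with
  | _ n ih =>
  intro p hp hn
  by_cases h0 : p 0 = 0
  · have hpl := (pl_zero hp 0).1 h0
    have : ∀ m, removeLEdgeAux l m p = fun _ => 0 := by
      intro m; cases m <;> simp [removeLEdgeAux, h0]
    simp [this]
  have hpl := (pl_lt hp 0).1 h0
  obtain ⟨m, rfl⟩ : ∃ m, n = m + 1 := ⟨n - 1, by omega⟩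
  obtain ⟨k, hk⟩ : ∃ k, plen p = k + 1 := ⟨plen p - 1, by omega⟩
  by_cases he : p 0 + plen p - 1 ≤ l
  · have : ∀ m, removeLEdgeAux l (m+1) p = fun i => p (i + 1) - 1 := by
      intro m; simp only [removeLEdgeAux, if_neg h0, if_pos he]
    rw [hk, this, this]
    refine ⟨fun i => ?_, fun i => ?_, rfl⟩
    · have := hp.1 i (i+1) (by omega)
      simp only; omega
    · have := hp.1 (i+1) (i+1+1) (by omega)
      simp only; omega
  · obtain ⟨s1, s2, s3, s4, s5⟩ := seg_spec hp (not_le.1 he) h0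
    have key : ∀ m, removeLEdgeAux l (m+1) p = fun i =>
      if i + 1 < firstSeg l p then p (i + 1) - 1
      else if i + 1 = firstSeg l p then p 0 + firstSeg l p - 1 - l
      else removeLEdgeAux l m (fun j => p (j + firstSeg l p)) (i - firstSeg l p) := by
      intro m; simp only [removeLEdgeAux, if_neg h0, if_neg he]
    have ht := tail_part hp (firstSeg l p)
    have htl := tail_plen hp (firstSeg l p)
    obtain ⟨i1, i2, i3⟩ := ih m (by omega) _ ht (by omega)
    obtain ⟨j1, j2, j3⟩ := ih k (by omega) _ ht (by omega)
    rw [hk, key, key, i3, j3]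
    rw [i3] at i1 i2
    refine ⟨fun i => ?_, fun i => ?_, rfl⟩
    · have a1 := hp.1 i (i+1) (by omega)
      simp only
      split_ifs with c1 c2
      · omega
      · by_cases hi : i = 0
        · subst hi; omega
        · have := s4 i (by omega) (by omega)
          omega
      · have := i1 (i - firstSeg l p)
        simp only [Nat.sub_add_cancel (show firstSeg l p ≤ i by omega)] at this
        exact this
    · have a1 := hp.1 (i+1) (i+1+1) (by omega)
      simp only
      by_cases c1 : i + 1 + 1 < firstSeg l p
      · rw [if_pos c1, if_pos (by omega)]; omega
      by_cases c2 : i + 1 + 1 = firstSeg l p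
      · rw [if_neg c1, if_pos c2, if_pos (by omega)]
        have := s4 (i+1) (by omega) (by omega)
        omega
      rw [if_neg c1, if_neg c2, if_neg (by omega)]
      by_cases c3 : i + 1 = firstSeg l p
      · rw [if_pos c3]
        have := i1 (i + 1 - firstSeg l p)
        simp only [Nat.sub_add_cancel (show firstSeg l p ≤ i + 1 by omega)] at this
        have c4 : p (i + 1) = p (firstSeg l p) := by rw [c3]
        omega
      · rw [if_neg c3]
        have := i2 (i - firstSeg l p)
        rwa [show i - firstSeg l p + 1 = i + 1 - firstSeg l p by omega] at this

theorem rem_part {l : ℕ} (hl : 2 ≤ l) {p : ℕ → ℕ} (hp : IsPartition p) :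
    IsPartition (removeLEdge l p) ∧ plen (removeLEdge l p) ≤ plen p ∧
    ∀ i, removeLEdge l p i ≤ p i - 1 := by
  obtain ⟨h1, h2, -⟩ := rem_main hl (plen p) p hp le_rfl
  have hq : IsPartition (removeLEdge l p) := by
    refine ⟨fun i j hij => antitone_nat_of_succ_le h2 hij, plen p, fun i hi => ?_⟩
    have := h1 i
    rw [(pl_zero hp i).2 hi] at this
    unfold removeLEdge
    omega
  refine ⟨hq, ?_, h1⟩
  rw [← pl_zero hq]
  have := h1 (plen p)
  rw [(pl_zero hp _).2 le_rfl] at this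
  unfold removeLEdge
  omega

theorem elen_of {l : ℕ} (hl : 2 ≤ l) {p : ℕ → ℕ} (hp : IsPartition p) (E : ℕ)
    (h : (∑ i ∈ Finset.range (plen p), removeLEdge l p i) + E
      = ∑ i ∈ Finset.range (plen p), p i) : elen l p = E := by
  obtain ⟨a, b, -⟩ := rem_part hl hp
  unfold elen
  rw [pdeg_eq hp _ le_rfl, pdeg_eq a _ b]
  omega

theorem elen_spec {l : ℕ} (hl : 2 ≤ l) {p : ℕ → ℕ} (hp : IsPartition p) :
    (∑ i ∈ Finset.range (plen p), removeLEdge l p i) + elen l p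
      = ∑ i ∈ Finset.range (plen p), p i := by
  obtain ⟨a, b, c⟩ := rem_part hl hp
  have : (∑ i ∈ Finset.range (plen p), removeLEdge l p i) ≤
    ∑ i ∈ Finset.range (plen p), p i :=
    Finset.sum_le_sum fun i _ => (c i).trans (Nat.sub_le _ _)
  unfold elen
  rw [pdeg_eq hp _ le_rfl, pdeg_eq a _ b]
  omega

theorem sum_shift (p : ℕ → ℕ) (k : ℕ) (h : ∀ i, i < k → p (i + 1) ≠ 0) :
    (∑ i ∈ Finset.range k, (p (i + 1) - 1)) + (p 0 + k) = ∑ i ∈ Finset.range (k + 1), p i := by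
  rw [Finset.sum_range_succ' p k]
  have : ∑ i ∈ Finset.range k, p (i + 1) = ∑ i ∈ Finset.range k, ((p (i + 1) - 1) + 1) := by
    apply Finset.sum_congr rfl
    intro i hi
    have := h i (Finset.mem_range.1 hi)
    omega
  rw [this, Finset.sum_add_distrib]
  simp
  omega

theorem elen_zero {l : ℕ} (hl : 2 ≤ l) {p : ℕ → ℕ} (hp : IsPartition p) (h0 : p 0 = 0) :
    elen l p = 0 := by
  apply elen_of hl hp
  have := (pl_zero hp 0).1 h0
  rw [Nat.le_zero.1 this]
  simp

theorem elen_small {l : ℕ} (hl : 2 ≤ l) {p : ℕ → ℕ} (hp : IsPartition p) (h0 : p 0 ≠ 0)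
    (he : p 0 + plen p - 1 ≤ l) : elen l p = p 0 + plen p - 1 := by
  apply elen_of hl hp
  have hpl := (pl_lt hp 0).1 h0
  obtain ⟨k, hk⟩ : ∃ k, plen p = k + 1 := ⟨plen p - 1, by omega⟩
  have : removeLEdge l p = fun i => p (i + 1) - 1 := by
    unfold removeLEdge
    rw [hk]
    simp only [removeLEdgeAux, if_neg h0, if_pos he]
  rw [this, hk, ← sum_shift p k (fun i hi => (pl_lt hp _).2 (by omega)), Finset.sum_range_succ]
  have := (pl_zero hp (k+1)).2 (by omega)
  simp only [this]
  omega

theorem elen_big {l : ℕ} (hl : 2 ≤ l) {p : ℕ → ℕ} (hp : IsPartition p) (h0 : p 0 ≠ 0)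
    (he : l < p 0 + plen p - 1) :
    elen l p = l + elen l (fun j => p (j + firstSeg l p)) := by
  apply elen_of hl hp
  have hpl := (pl_lt hp 0).1 h0
  obtain ⟨k, hk⟩ : ∃ k, plen p = k + 1 := ⟨plen p - 1, by omega⟩
  obtain ⟨s1, s2, s3, s4, s5⟩ := seg_spec hp he h0
  have ht := tail_part hp (firstSeg l p)
  have htl := tail_plen hp (firstSeg l p)
  have hsp := elen_spec hl ht
  have key : removeLEdge l p = fun i =>
      if i + 1 < firstSeg l p then p (i + 1) - 1
      else if i + 1 = firstSeg l p then p 0 + firstSeg l p - 1 - l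
      else removeLEdge l (fun j => p (j + firstSeg l p)) (i - firstSeg l p) := by
    have := (rem_main hl k _ ht (by omega)).2.2
    unfold removeLEdge
    rw [← this, hk]
    simp only [removeLEdgeAux, if_neg h0, if_neg (not_le.2 he)]
  rw [htl] at hsp
  obtain ⟨h, hh⟩ : ∃ h, firstSeg l p = h + 1 := ⟨firstSeg l p - 1, by omega⟩
  obtain ⟨t, ht⟩ : ∃ t, plen p = firstSeg l p + t := ⟨plen p - firstSeg l p, by omega⟩
  have e1 : ∑ i ∈ Finset.range t, removeLEdge l p (firstSeg l p + i) =
      ∑ i ∈ Finset.range t, removeLEdge l (fun j => p (j + firstSeg l p)) i := by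
    apply Finset.sum_congr rfl
    intro i _
    rw [key]
    simp only
    rw [if_neg (by omega), if_neg (by omega)]
    congr 1; omega
  have e2 : ∑ i ∈ Finset.range h, removeLEdge l p i = ∑ i ∈ Finset.range h, (p (i+1) - 1) := by
    apply Finset.sum_congr rfl
    intro i hi
    have := Finset.mem_range.1 hi
    rw [key]
    simp only
    rw [if_pos (by omega)]
  have e3 : removeLEdge l p h = p 0 + firstSeg l p - 1 - l := by
    rw [key]
    simp only
    rw [if_neg (by omega), if_pos (by omega)]
  have e4 := sum_shift p h (fun i hi => (pl_lt hp _).2 (by omega))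
  have e5 : ∑ i ∈ Finset.range t, p (firstSeg l p + i) =
      ∑ i ∈ Finset.range t, p (i + firstSeg l p) := by
    apply Finset.sum_congr rfl
    intro i _
    rw [add_comm]
  rw [ht, Finset.sum_range_add, Finset.sum_range_add, e1, e5]
  rw [ht, Nat.add_sub_cancel_left] at hsp
  have e6 : ∑ i ∈ Finset.range (firstSeg l p), removeLEdge l p i + l =
      ∑ i ∈ Finset.range (firstSeg l p), p i := by
    have : ∑ i ∈ Finset.range (firstSeg l p), removeLEdge l p i =
        ∑ i ∈ Finset.range (h+1), removeLEdge l p i := by rw [← hh]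
    rw [this, Finset.sum_range_succ, e2, e3]
    have : ∑ i ∈ Finset.range (firstSeg l p), p i =
        ∑ i ∈ Finset.range (h+1), p i := by rw [← hh]
    rw [this, ← e4]
    omega
  omega

theorem elen_pos {l : ℕ} (hl : 2 ≤ l) {p : ℕ → ℕ} (hp : IsPartition p) (h0 : p 0 ≠ 0) :
    0 < elen l p := by
  have hpl := (pl_lt hp 0).1 h0
  by_cases he : p 0 + plen p - 1 ≤ l
  · rw [elen_small hl hp h0 he]; omega
  · rw [elen_big hl hp h0 (by omega)]; omega

theorem full_iff {l : ℕ} (hl : 2 ≤ l) : ∀ (n : ℕ) (p : ℕ → ℕ), IsPartition p → p 0 ≠ 0 →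
    plen p ≤ n → ((edgeConnAux l n p ∧ ¬ l ∣ elen l p) ↔ FullRunner l p) := by
  intro n
  induction n with
  | zero =>
    intro p hp h0 hn
    have hpl := (pl_lt hp 0).1 h0
    omega
  | succ m ih =>
  intro p hp h0 hn
  have hpl := (pl_lt hp 0).1 h0
  by_cases he : p 0 + plen p - 1 ≤ l
  · have hE := elen_small hl hp h0 he
    simp only [edgeConnAux, hE, if_pos he, true_and]
    constructor
    · intro hd k
      have hlt : p 0 + plen p - 1 < l := by
        rcases Nat.lt_or_ge (p 0 + plen p - 1) l with h | h
        · exact h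
        · exact absurd (by rw [le_antisymm he h]) hd
      rcases k with _ | k
      · exact ⟨0, by simp⟩
      · have hk : (k + 1) * l = k * l + l := by ring
        refine ⟨(k+1) * l - p 0, ?_⟩
        rw [(pl_zero hp _).2 (by omega)]
        omega
    · intro hf hd
      have := Nat.le_of_dvd (by omega) hd
      obtain ⟨i, hi⟩ := hf 1
      have := pl_zero hp i
      omega
  · have hE := elen_big hl hp h0 (by omega)
    obtain ⟨s1, s2, s3, s4, s5⟩ := seg_spec hp (not_le.1 he) h0
    have ht := tail_part hp (firstSeg l p)
    have htl := tail_plen hp (firstSeg l p)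
    have hge : ∀ i, p i + l ≤ p 0 + i → firstSeg l p ≤ i := by
      intro i hi
      by_contra hc
      rcases Nat.eq_zero_or_pos i with rfl | hpos
      · omega
      · have := s4 i hpos (by omega)
        omega
    by_cases hz : p (firstSeg l p) = 0
    · have h2 := elen_zero hl ht (by simpa using hz)
      rw [h2] at hE
      have := (pl_zero hp _).1 hz
      constructor
      · rintro ⟨-, hd⟩
        exact absurd (by rw [hE]; simp) hd
      · intro hf
        obtain ⟨i, hi⟩ := hf 1
        have h3 := hge i (by omega)
        have := (pl_zero hp i).2 (by omega)
        omega
    · have hpos := elen_pos hl ht (by simpa using hz)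
      have IH := ih _ ht (by simpa using hz) (by omega)
      have hnd : l ∣ elen l p ↔ l ∣ elen l (fun j => p (j + firstSeg l p)) := by
        rw [hE]; simp
      rw [hnd]
      simp only [edgeConnAux, if_neg (show ¬ elen l p ≤ l by omega)]
      rw [and_assoc, IH]
      constructor
      · rintro ⟨h1, hf⟩ k
        rcases k with _ | k
        · exact ⟨0, by simp⟩
        · obtain ⟨i, hi⟩ := hf k
          simp only [zero_add] at hi
          have hk : (k + 1) * l = k * l + l := by ring
          exact ⟨i + firstSeg l p, by omega⟩
      · intro hf
        have h1 : p 0 + firstSeg l p = l + p (firstSeg l p) := by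
          obtain ⟨i, hi⟩ := hf 1
          have h3 := hge i (by omega)
          have := hp.1 _ _ h3
          omega
        refine ⟨h1, fun k => ?_⟩
        obtain ⟨i, hi⟩ := hf (k + 1)
        have hk : (k + 1) * l = k * l + l := by ring
        have h3 := hge i (by omega)
        refine ⟨i - firstSeg l p, ?_⟩
        simp only [zero_add, Nat.sub_add_cancel h3]
        omega

theorem full_hook {l : ℕ} (hl : 2 ≤ l) {p q : ℕ → ℕ} (hp : IsPartition p)
    (hf : FullRunner l p) (hq : IsHookRemoval l p q) : q 0 = p 0 ∧ FullRunner l q := by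
  obtain ⟨hqp, a, b, hab, h1, h2, h3, h4⟩ := hq
  -- the target position of the moved bead is not occupied
  have hno : ∀ i, p i + l + a ≠ p a + i := by
    intro i hi
    rcases Nat.lt_or_ge b i with hbi | hbi
    · have := h4 i hbi
      have := hqp.1 b i (by omega)
      omega
    · rcases Nat.lt_or_ge a b with hlt | hge
      · have e := h2 (b-1) (by omega) (by omega)
        rw [show b - 1 + 1 = b by omega] at e
        have := hqp.1 (b-1) b (by omega)
        have := hp.1 i b hbi
        omega
      · have := hp.1 i b hbi
        have : a = b := by omega
        subst this
        omega
  have hoff : ∀ k, p a + k * l ≠ p 0 + a := by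
    intro k hk
    obtain ⟨i, hi⟩ := hf (k + 1)
    have : (k + 1) * l = k * l + l := by ring
    exact hno i (by omega)
  have ha : a ≠ 0 := by
    rintro rfl
    exact hoff 0 (by simp)
  have hq0 := h1 0 (by omega)
  refine ⟨hq0, fun k => ?_⟩
  obtain ⟨i, hi⟩ := hf k
  rcases Nat.lt_trichotomy i a with h | h | h
  · exact ⟨i, by rw [h1 i h, hq0]; exact hi⟩
  · subst h; exact absurd hi (hoff k)
  · rcases Nat.lt_or_ge b i with hbi | hbi
    · exact ⟨i, by rw [h4 i hbi, hq0]; exact hi⟩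
    · refine ⟨i - 1, ?_⟩
      have := h2 (i-1) (by omega) (by omega)
      rw [show i - 1 + 1 = i by omega] at this
      omega

/-- Let `λ` be a nonzero edge `l`-connected partition with `l ∤ e_l(λ)`, and let
`λ_H` be obtained from `λ` by removing a skew `l`-hook `H`. Then `λ_H` is edge
`l`-connected, `l ∤ e_l(λ_H)`, and `(λ_H)_1 = λ_1`. -/
theorem hookRemoval_preserves (l : ℕ) (hl : 2 ≤ l) (p q : ℕ → ℕ)
    (hp : IsPartition p) (hne : p 0 ≠ 0)
    (hconn : EdgeLConnected l p) (hndvd : ¬ l ∣ elen l p)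
    (hq : IsHookRemoval l p q) :
    EdgeLConnected l q ∧ ¬ l ∣ elen l q ∧ q 0 = p 0 := by
  obtain ⟨h1, h2⟩ := full_hook hl hp ((full_iff hl _ p hp hne le_rfl).1 ⟨hconn, hndvd⟩) hq
  have h3 := (full_iff hl _ q hq.1 (by rw [h1]; exact hne) le_rfl).2 h2
  exact ⟨h3.1, h3.2, h1⟩
end
end
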